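/- For n ≥ 3, the 2n-point configuration formed by the vertices of a regular n-gon together with points slightly inside near the midpoints of all edges (in generic position) is monochromatic under the Orchard relation. -/

import Mathlib

open scoped Classical

noncomputable section

/-- Orientation determinant of two vectors in the plane. -/
def det2 (u v : ℝ × ℝ) : ℝ := u.1 * v.2 - u.2 * v.1

/-- The line through `A` and `B` separates the points `P` and `Q`
(they lie in distinct open half-planes determined by the line). -/
def SepLine (A B P Q : ℝ × ℝ) : Prop :=
  det2 (B - A) (P - A) * det2 (B - A) (Q - A) < 0

/-- A finite planar point set is a generic configuration if no three of its
points are collinear. -/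
def Generic (C : Finset (ℝ × ℝ)) : Prop :=
  ∀ a ∈ C, ∀ b ∈ C, ∀ c ∈ C, a ≠ b → a ≠ c → b ≠ c →
    ¬ Collinear ℝ ({a, b, c} : Set (ℝ × ℝ))

/-- `nsep C P Q` is the number of lines spanned by (unordered) pairs of points of
`C \ {P,Q}` that separate `P` from `Q`. -/
def nsep (C : Finset (ℝ × ℝ)) (P Q : ℝ × ℝ) : ℕ :=
  (((C \ {P, Q}).powersetCard 2).filter
    (fun s => ∃ A ∈ s, ∃ B ∈ s, A ≠ B ∧ SepLine A B P Q)).card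

/-- The Orchard relation: `P ∼ Q` iff `n(P,Q) ≡ n - 3 (mod 2)` where `n = |C|`. -/
def Orchard (C : Finset (ℝ × ℝ)) (P Q : ℝ × ℝ) : Prop :=
  (nsep C P Q : ℤ) ≡ (C.card : ℤ) - 3 [ZMOD 2]

/-- A configuration is monochromatic if all its points are Orchard-equivalent. -/
def Mono (C : Finset (ℝ × ℝ)) : Prop :=
  ∀ P ∈ C, ∀ Q ∈ C, P ≠ Q → Orchard C P Q

/-- A configuration is in convex position if each of its points is a vertex of
the convex hull. -/
def ConvexPos (C : Finset (ℝ × ℝ)) : Prop :=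
  ∀ P ∈ C, P ∉ convexHull ℝ ((C : Set (ℝ × ℝ)) \ {P})

/-- The `k`-th vertex of the regular `n`-gon inscribed in the unit circle
centered at the origin. -/
def vtx (n : ℕ) (k : Fin n) : ℝ × ℝ :=
  (Real.cos (2 * Real.pi * k / n), Real.sin (2 * Real.pi * k / n))

/-- The configuration consisting of the vertices of the regular `n`-gon together
with its barycenter (the origin). -/
def ngonWithCenter (n : ℕ) : Finset (ℝ × ℝ) :=
  insert ((0, 0) : ℝ × ℝ) (Finset.image (vtx n) Finset.univ)

/-! ### Orientation of point triples -/

/-- Orientation determinant of three points in the plane. -/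
def orient (A B C : ℝ × ℝ) : ℝ := det2 (B - A) (C - A)

lemma orient_def (A B C : ℝ × ℝ) :
    orient A B C = (B.1 - A.1) * (C.2 - A.2) - (B.2 - A.2) * (C.1 - A.1) := rfl

lemma orient_rotate (A B C : ℝ × ℝ) : orient B C A = orient A B C := by
  simp only [orient_def]; ring

lemma orient_swap (A B C : ℝ × ℝ) : orient A C B = -orient A B C := by
  simp only [orient_def]; ring

lemma collinear_of_orient_eq_zero {A B C : ℝ × ℝ} (hAB : A ≠ B) (h : orient A B C = 0) :
    Collinear ℝ ({A, B, C} : Set (ℝ × ℝ)) := by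
  rw [collinear_iff_of_mem (p₀ := A) (by simp)]
  refine ⟨B - A, ?_⟩
  rw [orient_def] at h
  have key : ∃ r : ℝ, C = r • (B - A) + A := by
    by_cases h1 : B.1 - A.1 = 0
    · have h2 : B.2 - A.2 ≠ 0 := by
        intro h2
        exact hAB (Prod.ext (by linarith) (by linarith))
      refine ⟨(C.2 - A.2) / (B.2 - A.2), Prod.ext ?_ ?_⟩
      · have h3 : (B.2 - A.2) * (C.1 - A.1) = 0 := by
          rw [h1] at h; linarith
        have h4 := (mul_eq_zero.mp h3).resolve_left h2
        simp [h1]; linarith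
      · simp [div_mul_cancel₀ _ h2]
    · refine ⟨(C.1 - A.1) / (B.1 - A.1), Prod.ext ?_ ?_⟩
      · simp [div_mul_cancel₀ _ h1]
      · simp only [Prod.snd_add, Prod.smul_snd, Prod.snd_sub, smul_eq_mul]
        field_simp
        linarith
  intro P hP
  rcases hP with rfl | rfl | rfl
  · exact ⟨0, by simp⟩
  · exact ⟨1, by simp⟩
  · exact key

/-! ### Combinatorics of the exceptional triples -/

/-- The triples `x < y < z` of indices `2i, 2i+1, 2i+2` modulo `2n`; even indices label vertices
and odd indices label points near edge midpoints. -/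
def EdgeTriple (n x y z : ℕ) : Prop :=
  (x % 2 = 0 ∧ y = x + 1 ∧ z = x + 2 ∧ x + 2 < 2 * n) ∨
    (x = 0 ∧ 0 < y ∧ y + 2 = 2 * n ∧ z + 1 = 2 * n)

/-- For `a < b`, the indices `a`, `b`, `p` form, once sorted, an edge triple. -/
def EdgePair (n p : ℕ) (s : ℕ × ℕ) : Prop :=
  EdgeTriple n s.1 s.2 p ∨ EdgeTriple n s.1 p s.2 ∨ EdgeTriple n p s.1 s.2

/-- The index `p` lies strictly between the two entries of `s`. -/
def Between (p : ℕ) (s : ℕ × ℕ) : Prop := s.1 < p ∧ p < s.2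

/-- Increasing pairs of indices below `2n` avoiding `p` and `q`. -/
def indexPairs (n p q : ℕ) : Finset (ℕ × ℕ) :=
  (Finset.range (2 * n) ×ˢ Finset.range (2 * n)).filter
    fun s => s.1 < s.2 ∧ s.1 ≠ p ∧ s.1 ≠ q ∧ s.2 ≠ p ∧ s.2 ≠ q

lemma mem_indexPairs {n p q : ℕ} {s : ℕ × ℕ} : s ∈ indexPairs n p q ↔
    s.1 < s.2 ∧ s.2 < 2 * n ∧ s.1 ≠ p ∧ s.1 ≠ q ∧ s.2 ≠ p ∧ s.2 ≠ q := by
  simp only [indexPairs, Finset.mem_filter, Finset.mem_product, Finset.mem_range]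
  constructor <;> intro h <;> refine ⟨by omega, by omega, ?_⟩ <;> simp_all

lemma card_filter_xor {α : Type*} {S : Finset α} {r p q : α → Prop} [DecidablePred r]
    [DecidablePred p] [DecidablePred q] (hr : ∀ s ∈ S, r s ↔ Xor (p s) (q s)) :
    (S.filter r).card ≡ (S.filter p).card + (S.filter q).card [MOD 2] := by
  have h : (S.filter r).card + 2 * (S.filter fun s => p s ∧ q s).card =
      (S.filter p).card + (S.filter q).card := by
    simp only [Finset.card_filter, Finset.mul_sum, ← Finset.sum_add_distrib]
    refine Finset.sum_congr rfl fun s hs => ?_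
    by_cases h1 : p s <;> by_cases h2 : q s <;> simp [hr s hs, Xor, h1, h2]
  unfold Nat.ModEq
  omega

lemma card_between_of_lt {n p q : ℕ} (hpq : p < q) (hq : q < 2 * n) :
    ((indexPairs n p q).filter (Between p)).card = p * (2 * n - 2 - p) := by
  have : (indexPairs n p q).filter (Between p) =
      Finset.range p ×ˢ ((Finset.Ioo p (2 * n)).erase q) := by
    ext ⟨a, b⟩
    simp only [Finset.mem_filter, mem_indexPairs, Between, Finset.mem_product, Finset.mem_range,
      Finset.mem_erase, Finset.mem_Ioo]
    omega
  rw [this, Finset.card_product, Finset.card_range, Finset.card_erase_of_mem (by simp; omega),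
    Nat.card_Ioo]
  congr 1; omega

lemma card_between_of_gt {n p q : ℕ} (hpq : p < q) (hq : q < 2 * n) :
    ((indexPairs n p q).filter (Between q)).card = (q - 1) * (2 * n - 1 - q) := by
  have : (indexPairs n p q).filter (Between q) =
      ((Finset.range q).erase p) ×ˢ (Finset.Ioo q (2 * n)) := by
    ext ⟨a, b⟩
    simp only [Finset.mem_filter, mem_indexPairs, Between, Finset.mem_product, Finset.mem_range,
      Finset.mem_erase, Finset.mem_Ioo]
    omega
  rw [this, Finset.card_product, Finset.card_erase_of_mem (by simpa using hpq), Finset.card_range,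
    Nat.card_Ioo]
  congr 1; omega

lemma card_between_add {n p q : ℕ} (hpq : p < q) (hq : q < 2 * n) :
    ((indexPairs n p q).filter (Between p)).card + ((indexPairs n p q).filter (Between q)).card ≡
      p + q + 1 [MOD 2] := by
  rw [card_between_of_lt hpq hq, card_between_of_gt hpq hq]
  have h1 : p * (2 * n - 2 - p) % 2 = p % 2 := by
    rcases Nat.mod_two_eq_zero_or_one p with h | h
    · simp [Nat.mul_mod, h]
    · have : (2 * n - 2 - p) % 2 = 1 := by omega
      simp [Nat.mul_mod, h, this]
  have h2 : (q - 1) * (2 * n - 1 - q) % 2 = (q - 1) % 2 := by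
    rcases Nat.mod_two_eq_zero_or_one (q - 1) with h | h
    · simp [Nat.mul_mod, h]
    · have : (2 * n - 1 - q) % 2 = 1 := by omega
      simp [Nat.mul_mod, h, this]
  unfold Nat.ModEq
  omega

/-- Increasing pairs of indices completing `p` to an edge triple. -/
def edgePairs (n p : ℕ) : Finset (ℕ × ℕ) :=
  (Finset.range (2 * n) ×ˢ Finset.range (2 * n)).filter fun s => s.1 < s.2 ∧ EdgePair n p s

lemma EdgeTriple.lt {n x y z : ℕ} (h : EdgeTriple n x y z) : x < y ∧ y < z ∧ z < 2 * n := by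
  unfold EdgeTriple at h
  omega

lemma EdgePair.lt {n p a b : ℕ} (h : EdgePair n p (a, b)) :
    a < b ∧ b < 2 * n ∧ a ≠ p ∧ b ≠ p := by
  rcases h with h | h | h <;> have := h.lt <;> dsimp only at this <;> omega

lemma mem_edgePairs {n p a b : ℕ} : (a, b) ∈ edgePairs n p ↔ EdgePair n p (a, b) := by
  rw [edgePairs, Finset.mem_filter, Finset.mem_product, Finset.mem_range, Finset.mem_range]
  refine ⟨fun h => h.2.2, fun h => ?_⟩
  have := h.lt
  exact ⟨⟨by dsimp only; omega, this.2.1⟩, this.1, h⟩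

lemma edgePair_iff_of_even {n p a b : ℕ} (hn : 3 ≤ n) (hp : p < 2 * n) (h : p % 2 = 0) :
    EdgePair n p (a, b) ↔
      ((a, b) = if p = 0 then (2 * n - 2, 2 * n - 1) else (p - 2, p - 1)) ∨
      (a, b) = if p + 2 = 2 * n then (0, 2 * n - 1) else (p + 1, p + 2) := by
  constructor
  · rintro (h' | h' | h') <;> rcases h' with h' | h' <;> dsimp only at h' <;>
      split_ifs <;> simp only [Prod.mk.injEq] <;> omega
  · rintro (h' | h')
    · split_ifs at h' with h0 <;> rw [Prod.mk.injEq] at h'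
      · exact Or.inr (Or.inr (Or.inr (by dsimp only; omega)))
      · exact Or.inl (Or.inl (by dsimp only; omega))
    · split_ifs at h' with h0 <;> rw [Prod.mk.injEq] at h'
      · exact Or.inr (Or.inl (Or.inr (by dsimp only; omega)))
      · exact Or.inr (Or.inr (Or.inl (by dsimp only; omega)))

lemma edgePair_iff_of_odd {n p a b : ℕ} (hn : 3 ≤ n) (hp : p < 2 * n) (h : p % 2 = 1) :
    EdgePair n p (a, b) ↔
      (a, b) = if p + 1 = 2 * n then (0, 2 * n - 2) else (p - 1, p + 1) := by
  constructor
  · rintro (h' | h' | h') <;> rcases h' with h' | h' <;> dsimp only at h' <;>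
      split_ifs <;> simp only [Prod.mk.injEq] <;> omega
  · intro h'
    split_ifs at h' with h0 <;> rw [Prod.mk.injEq] at h'
    · exact Or.inl (Or.inr (by dsimp only; omega))
    · exact Or.inr (Or.inl (Or.inl (by dsimp only; omega)))

lemma card_edgePairs {n p : ℕ} (hn : 3 ≤ n) (hp : p < 2 * n) :
    (edgePairs n p).card ≡ p [MOD 2] := by
  rcases Nat.mod_two_eq_zero_or_one p with h | h
  · have : edgePairs n p =
        {if p = 0 then (2 * n - 2, 2 * n - 1) else (p - 2, p - 1),
          if p + 2 = 2 * n then (0, 2 * n - 1) else (p + 1, p + 2)} := by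
      ext ⟨a, b⟩
      rw [mem_edgePairs, edgePair_iff_of_even hn hp h, Finset.mem_insert, Finset.mem_singleton]
    rw [this, Finset.card_pair]
    · exact h.symm
    · split_ifs <;> simp only [ne_eq, Prod.mk.injEq] <;> omega
  · have : edgePairs n p =
        {if p + 1 = 2 * n then (0, 2 * n - 2) else (p - 1, p + 1)} := by
      ext ⟨a, b⟩
      rw [mem_edgePairs, edgePair_iff_of_odd hn hp h, Finset.mem_singleton]
    rw [this, Finset.card_singleton]
    exact h.symm

/-- Indices completing `p` and `q` to an edge triple. -/
def edgeCompletions (n p q : ℕ) : Finset ℕ :=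
  (Finset.range (2 * n)).filter fun c => EdgePair n p (min q c, max q c)

lemma mem_edgeCompletions {n p q c : ℕ} :
    c ∈ edgeCompletions n p q ↔ EdgePair n p (min q c, max q c) := by
  rw [edgeCompletions, Finset.mem_filter, Finset.mem_range]
  refine ⟨fun h => h.2, fun h => ⟨?_, h⟩⟩
  have := h.lt
  omega

lemma EdgePair.swap {n p q c : ℕ} (h : EdgePair n p (min q c, max q c)) :
    EdgePair n q (min p c, max p c) := by
  rcases le_total q c with h1 | h1 <;> rcases le_total p c with h2 | h2 <;>
    simp only [h1, h2, min_eq_left, max_eq_right, min_eq_right, max_eq_left, EdgePair] at h ⊢ <;>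
    have hlt : ∀ {x y z}, EdgeTriple n x y z → x < y ∧ y < z := fun h => ⟨h.lt.1, h.lt.2.1⟩ <;>
    rcases h with h | h | h <;> first
      | (have := hlt h; omega)
      | exact Or.inl h
      | exact Or.inr (Or.inl h)
      | exact Or.inr (Or.inr h)

lemma edgeCompletions_comm {n p q : ℕ} : edgeCompletions n p q = edgeCompletions n q p := by
  ext c
  rw [mem_edgeCompletions, mem_edgeCompletions]
  exact ⟨EdgePair.swap, EdgePair.swap⟩

lemma card_edgePairs_eq (n p q : ℕ) :
    (edgePairs n p).card =
      ((indexPairs n p q).filter (EdgePair n p)).card + (edgeCompletions n p q).card := by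
  rw [← Finset.card_filter_add_card_filter_not (s := edgePairs n p)
    (fun s => s.1 ≠ q ∧ s.2 ≠ q)]
  congr 1
  · congr 1
    ext ⟨a, b⟩
    rw [Finset.mem_filter, Finset.mem_filter, mem_edgePairs, mem_indexPairs]
    constructor
    · rintro ⟨h, h1⟩
      have := h.lt
      exact ⟨by tauto, h⟩
    · rintro ⟨h, h1⟩
      exact ⟨h1, by tauto⟩
  · refine Finset.card_nbij' (fun s => s.1 + s.2 - q) (fun c => (min q c, max q c)) ?_ ?_ ?_ ?_
    · rintro ⟨a, b⟩ hs
      rw [Finset.mem_coe, Finset.mem_filter, mem_edgePairs] at hs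
      obtain ⟨h, hq⟩ := hs
      have hab := h.lt.1
      rw [Finset.mem_coe, mem_edgeCompletions]
      dsimp only at hq ⊢
      rwa [show min q (a + b - q) = a by omega, show max q (a + b - q) = b by omega]
    · intro c hc
      rw [Finset.mem_coe, mem_edgeCompletions] at hc
      rw [Finset.mem_coe, Finset.mem_filter, mem_edgePairs]
      exact ⟨hc, by dsimp only; omega⟩
    · rintro ⟨a, b⟩ hs
      rw [Finset.mem_coe, Finset.mem_filter, mem_edgePairs] at hs
      have hab := hs.1.lt.1
      have hq := hs.2
      simp only [Prod.mk.injEq]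
      omega
    · intro c _
      dsimp only
      omega

lemma card_edgePair_add {n p q : ℕ} (hn : 3 ≤ n) (hp : p < 2 * n)
    (hq : q < 2 * n) :
    ((indexPairs n p q).filter (EdgePair n p)).card +
      ((indexPairs n p q).filter (EdgePair n q)).card ≡ p + q [MOD 2] := by
  have h1 := card_edgePairs_eq n p q
  have h2 := card_edgePairs_eq n q p
  have h3 := card_edgePairs hn hp
  have h4 := card_edgePairs hn hq
  have h5 : indexPairs n q p = indexPairs n p q := by
    ext s
    simp only [mem_indexPairs]
    tauto
  rw [h5, edgeCompletions_comm] at h2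
  unfold Nat.ModEq at *
  omega

/-! ### From orientations to the Orchard relation -/

/-- The orientations of the triples of `w 0, …, w (2n-1)` are those of `2n` points in convex
position, except that those of the edge triples are reversed. -/
structure EdgeReversed (n : ℕ) (w : ℕ → ℝ × ℝ) : Prop where
  pos : ∀ x y z, x < y → y < z → z < 2 * n → ¬ EdgeTriple n x y z → 0 < orient (w x) (w y) (w z)
  neg : ∀ x y z, EdgeTriple n x y z → orient (w x) (w y) (w z) < 0

lemma injOn_of_orient_pos {n : ℕ} (hn : 3 ≤ n) {w : ℕ → ℝ × ℝ}
    (hw : ∀ x y z, x < y → y < z → z < 2 * n → ¬ EdgeTriple n x y z →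
      0 < orient (w x) (w y) (w z)) :
    Set.InjOn w (Finset.range (2 * n) : Set ℕ) := by
  have key : ∀ a b, a < b → b < 2 * n → w a ≠ w b := by
    intro a b hab hb h
    by_cases h1 : b + 2 < 2 * n
    · have := hw a b (b + 2) hab (by omega) h1 (by unfold EdgeTriple; omega)
      simp [orient_def, h] at this
    by_cases h2 : 2 ≤ a
    · have := hw (a - 2) a b (by omega) hab hb (by unfold EdgeTriple; omega)
      rw [h, orient_def] at this
      linarith
    · have := hw a 3 b (by omega) (by omega) hb (by unfold EdgeTriple; omega)
      simp [orient_def, h] at this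
  intro a ha b hb h
  simp only [Finset.coe_range, Set.mem_Iio] at ha hb
  rcases lt_trichotomy a b with hab | hab | hab
  · exact absurd h (key a b hab hb)
  · exact hab
  · exact absurd h.symm (key b a hab ha)

namespace EdgeReversed

lemma orient_sign {n : ℕ} {w : ℕ → ℝ × ℝ} (hw : EdgeReversed n w) {a b p : ℕ} (hab : a < b)
    (hb : b < 2 * n) (hp : p < 2 * n) (hpa : a ≠ p) (hpb : b ≠ p) :
    (Xor (Between p (a, b)) (EdgePair n p (a, b)) ∧ orient (w a) (w b) (w p) < 0) ∨
      (¬ Xor (Between p (a, b)) (EdgePair n p (a, b)) ∧ 0 < orient (w a) (w b) (w p)) := by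
  have hsign : ∀ x y z, x < y → y < z → z < 2 * n →
      (EdgeTriple n x y z ∧ orient (w x) (w y) (w z) < 0) ∨
      (¬ EdgeTriple n x y z ∧ 0 < orient (w x) (w y) (w z)) := fun x y z h1 h2 h3 => by
    by_cases h : EdgeTriple n x y z
    · exact Or.inl ⟨h, hw.neg _ _ _ h⟩
    · exact Or.inr ⟨h, hw.pos _ _ _ h1 h2 h3 h⟩
  obtain h | h | h : p < a ∨ (a < p ∧ p < b) ∨ b < p := by omega
  · have hB : ¬ Between p (a, b) := by simp only [Between]; omega
    have hE : EdgePair n p (a, b) ↔ EdgeTriple n p a b := by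
      refine ⟨?_, fun h => Or.inr (Or.inr h)⟩
      rintro (h' | h' | h')
      · have := h'.lt; dsimp only at this; omega
      · have := h'.lt; dsimp only at this; omega
      · exact h'
    rw [orient_rotate]
    simpa [Xor, hB, hE] using hsign p a b h hab hb
  · have hB : Between p (a, b) := h
    have hE : EdgePair n p (a, b) ↔ EdgeTriple n a p b := by
      refine ⟨?_, fun h => Or.inr (Or.inl h)⟩
      rintro (h' | h' | h')
      · have := h'.lt; dsimp only at this; omega
      · exact h'
      · have := h'.lt; dsimp only at this; omega
    rw [orient_swap]
    simpa [Xor, hB, hE] using (hsign a p b h.1 h.2 hb).symm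
  · have hB : ¬ Between p (a, b) := by simp only [Between]; omega
    have hE : EdgePair n p (a, b) ↔ EdgeTriple n a b p := by
      refine ⟨?_, fun h => Or.inl h⟩
      rintro (h' | h' | h')
      · exact h'
      · have := h'.lt; dsimp only at this; omega
      · have := h'.lt; dsimp only at this; omega
    simpa [Xor, hB, hE] using hsign a b p hab h hp

lemma sepLine_iff {n : ℕ} {w : ℕ → ℝ × ℝ} (hw : EdgeReversed n w) {p q : ℕ} (hp : p < 2 * n)
    (hq : q < 2 * n) {s : ℕ × ℕ} (hs : s ∈ indexPairs n p q) :
    SepLine (w s.1) (w s.2) (w p) (w q) ↔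
      Xor (Xor (Between p s) (EdgePair n p s)) (Xor (Between q s) (EdgePair n q s)) := by
  obtain ⟨a, b⟩ := s
  obtain ⟨hab, hb, h1, h2, h3, h4⟩ := mem_indexPairs.mp hs
  change orient (w a) (w b) (w p) * orient (w a) (w b) (w q) < 0 ↔ _
  rcases hw.orient_sign hab hb hp h1 h3 with ⟨h5, h6⟩ | ⟨h5, h6⟩ <;>
    rcases hw.orient_sign hab hb hq h2 h4 with ⟨h7, h8⟩ | ⟨h7, h8⟩
  · exact iff_of_false (mul_pos_of_neg_of_neg h6 h8).not_gt (by rw [xor_def]; tauto)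
  · exact iff_of_true (mul_neg_of_neg_of_pos h6 h8) (Or.inl ⟨h5, h7⟩)
  · exact iff_of_true (mul_neg_of_pos_of_neg h6 h8) (Or.inr ⟨h7, h5⟩)
  · exact iff_of_false (mul_pos h6 h8).not_gt (by rw [xor_def]; tauto)

end EdgeReversed

lemma SepLine.symm {A B P Q : ℝ × ℝ} (h : SepLine A B P Q) : SepLine B A P Q := by
  change orient A B P * orient A B Q < 0 at h
  change orient B A P * orient B A Q < 0
  have e : ∀ X, orient B A X = -orient A B X := fun X => by simp only [orient_def]; ring
  rw [e, e]
  linarith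

lemma nsep_image_eq {n : ℕ} {w : ℕ → ℝ × ℝ} (hinj : Set.InjOn w (Finset.range (2 * n) : Set ℕ))
    {p q : ℕ} (hp : p < 2 * n) (hq : q < 2 * n) :
    nsep ((Finset.range (2 * n)).image w) (w p) (w q) =
      ((indexPairs n p q).filter fun s => SepLine (w s.1) (w s.2) (w p) (w q)).card := by
  have hw : ∀ {a b}, a < 2 * n → b < 2 * n → (w a = w b ↔ a = b) := fun ha hb =>
    ⟨fun h => hinj (by simpa using ha) (by simpa using hb) h, fun h => h ▸ rfl⟩
  symm
  unfold nsep
  refine Finset.card_bij (fun s _ => {w s.1, w s.2}) ?_ ?_ ?_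
  · rintro ⟨a, b⟩ hs
    rw [Finset.mem_filter, mem_indexPairs] at hs
    obtain ⟨⟨hab, hb, h1, h2, h3, h4⟩, hsep⟩ := hs
    dsimp only at *
    have ha := hab.trans hb
    have hne : w a ≠ w b := by rw [Ne, hw ha hb]; exact hab.ne
    rw [Finset.mem_filter, Finset.mem_powersetCard]
    refine ⟨⟨?_, Finset.card_pair hne⟩, w a, by simp, w b, by simp, hne, hsep⟩
    intro x hx
    rw [Finset.mem_insert, Finset.mem_singleton] at hx
    rw [Finset.mem_sdiff, Finset.mem_insert, Finset.mem_singleton]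
    rcases hx with rfl | rfl
    · exact ⟨Finset.mem_image_of_mem _ (by simpa using ha), by
        rw [hw ha hp, hw ha hq]; tauto⟩
    · exact ⟨Finset.mem_image_of_mem _ (by simpa using hb), by
        rw [hw hb hp, hw hb hq]; tauto⟩
  · rintro ⟨a, b⟩ hs ⟨c, d⟩ ht h
    rw [Finset.mem_filter, mem_indexPairs] at hs ht
    obtain ⟨⟨hab, hb, -⟩, -⟩ := hs
    obtain ⟨⟨hcd, hd, -⟩, -⟩ := ht
    dsimp only at *
    have ha := hab.trans hb
    have hc := hcd.trans hd
    have h1 : w a ∈ ({w c, w d} : Finset (ℝ × ℝ)) := h ▸ by simp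
    have h2 : w b ∈ ({w c, w d} : Finset (ℝ × ℝ)) := h ▸ by simp
    rw [Finset.mem_insert, Finset.mem_singleton, hw ha hc, hw ha hd] at h1
    rw [Finset.mem_insert, Finset.mem_singleton, hw hb hc, hw hb hd] at h2
    rw [Prod.mk.injEq]
    omega
  · intro t ht
    rw [Finset.mem_filter, Finset.mem_powersetCard] at ht
    obtain ⟨⟨hsub, hcard⟩, A, hA, B, hB, hAB, hsep⟩ := ht
    have htAB : t = {A, B} := by
      refine (Finset.eq_of_subset_of_card_le ?_ ?_).symm
      · simp [Finset.insert_subset_iff, hA, hB]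
      · rw [hcard, Finset.card_pair hAB]
    have hA' := hsub hA
    have hB' := hsub hB
    simp only [Finset.mem_sdiff, Finset.mem_image, Finset.mem_range, Finset.mem_insert,
      Finset.mem_singleton, not_or] at hA' hB'
    obtain ⟨⟨a, ha, rfl⟩, h1, h2⟩ := hA'
    obtain ⟨⟨b, hb, rfl⟩, h3, h4⟩ := hB'
    rw [hw ha hp] at h1
    rw [hw ha hq] at h2
    rw [hw hb hp] at h3
    rw [hw hb hq] at h4
    rw [Ne, hw ha hb] at hAB
    rcases lt_or_gt_of_ne hAB with hab | hab
    · exact ⟨(a, b), Finset.mem_filter.mpr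
        ⟨mem_indexPairs.mpr ⟨hab, hb, h1, h2, h3, h4⟩, hsep⟩, htAB.symm⟩
    · exact ⟨(b, a), Finset.mem_filter.mpr
        ⟨mem_indexPairs.mpr ⟨hab, ha, h3, h4, h1, h2⟩, hsep.symm⟩, by
          rw [htAB, Finset.pair_comm]⟩

lemma nsep_comm (C : Finset (ℝ × ℝ)) (P Q : ℝ × ℝ) : nsep C P Q = nsep C Q P := by
  unfold nsep
  have h : ∀ A B : ℝ × ℝ, SepLine A B P Q ↔ SepLine A B Q P := fun A B => by
    unfold SepLine; rw [mul_comm]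
  simp only [h, Finset.pair_comm P Q]

namespace EdgeReversed

lemma odd_nsep {n : ℕ} (hn : 3 ≤ n) {w : ℕ → ℝ × ℝ} (hw : EdgeReversed n w) {p q : ℕ}
    (hpq : p < q) (hq : q < 2 * n) :
    nsep ((Finset.range (2 * n)).image w) (w p) (w q) ≡ 1 [MOD 2] := by
  have hp := hpq.trans hq
  rw [nsep_image_eq (injOn_of_orient_pos hn hw.pos) hp hq]
  have h1 := card_filter_xor fun s hs => hw.sepLine_iff hp hq (s := s) hs
  have h2 := card_filter_xor (S := indexPairs n p q)
    fun s _ => Iff.refl (Xor (Between p s) (EdgePair n p s))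
  have h3 := card_filter_xor (S := indexPairs n p q)
    fun s _ => Iff.refl (Xor (Between q s) (EdgePair n q s))
  have h4 := card_between_add hpq hq
  have h5 := card_edgePair_add hn hp hq
  unfold Nat.ModEq at *
  omega

theorem mono {n : ℕ} (hn : 3 ≤ n) {w : ℕ → ℝ × ℝ} (hw : EdgeReversed n w) :
    Mono ((Finset.range (2 * n)).image w) := by
  intro P hP Q hQ hPQ
  obtain ⟨p, hp, rfl⟩ := Finset.mem_image.mp hP
  obtain ⟨q, hq, rfl⟩ := Finset.mem_image.mp hQ
  rw [Finset.mem_range] at hp hq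
  have h : nsep ((Finset.range (2 * n)).image w) (w p) (w q) ≡ 1 [MOD 2] := by
    rcases lt_trichotomy p q with h | h | h
    · exact hw.odd_nsep hn h hq
    · exact absurd (h ▸ rfl) hPQ
    · rw [nsep_comm]; exact hw.odd_nsep hn h hp
  unfold Orchard
  rw [Finset.card_image_of_injOn (injOn_of_orient_pos hn hw.pos), Finset.card_range]
  unfold Nat.ModEq at h
  unfold Int.ModEq
  omega

end EdgeReversed

/-! ### The regular polygon -/

/-- The vertices of the regular `n`-gon, indexed periodically by natural numbers. -/
def circlePt (n k : ℕ) : ℝ × ℝ :=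
  (Real.cos (2 * Real.pi * k / n), Real.sin (2 * Real.pi * k / n))

lemma circlePt_self {n : ℕ} (hn : n ≠ 0) : circlePt n n = circlePt n 0 := by
  have h : (n : ℝ) ≠ 0 := by exact_mod_cast hn
  simp [circlePt, mul_div_cancel_right₀ _ h]

lemma vtx_add_one {n : ℕ} [NeZero n] (hn : 3 ≤ n) (i : Fin n) :
    vtx n (i + 1) = circlePt n (i + 1) := by
  have h : vtx n (i + 1) = circlePt n ((i + 1 : Fin n) : ℕ) := rfl
  have h1 : ((1 : Fin n) : ℕ) = 1 := by
    rw [Fin.val_one', Nat.mod_eq_of_lt (by omega)]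
  rw [h, Fin.val_add, h1]
  rcases Nat.lt_or_ge (i + 1 : ℕ) n with h2 | h2
  · rw [Nat.mod_eq_of_lt h2]
  · have : (i + 1 : ℕ) = n := by omega
    rw [this, Nat.mod_self, circlePt_self (by omega)]

lemma orient_cos_sin (a b c : ℝ) :
    orient (Real.cos (2 * a), Real.sin (2 * a)) (Real.cos (2 * b), Real.sin (2 * b))
      (Real.cos (2 * c), Real.sin (2 * c)) =
    4 * Real.sin (b - a) * Real.sin (c - b) * Real.sin (c - a) := by
  have h : orient (Real.cos (2 * a), Real.sin (2 * a)) (Real.cos (2 * b), Real.sin (2 * b))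
      (Real.cos (2 * c), Real.sin (2 * c)) =
      Real.sin (2 * b - 2 * a) + Real.sin (2 * c - 2 * b) - Real.sin (2 * c - 2 * a) := by
    simp only [orient_def, Real.sin_sub]
    ring
  rw [h, show 2 * b - 2 * a = 2 * (b - a) by ring, show 2 * c - 2 * b = 2 * (c - b) by ring,
    show 2 * c - 2 * a = 2 * ((b - a) + (c - b)) by ring,
    show c - a = (b - a) + (c - b) by ring]
  generalize b - a = x
  generalize c - b = y
  simp only [Real.sin_two_mul, Real.sin_add, Real.cos_add]
  linear_combination -2 * Real.sin x * Real.cos x * Real.sin_sq_add_cos_sq y -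
    2 * Real.sin y * Real.cos y * Real.sin_sq_add_cos_sq x

lemma orient_circlePt (n i j k : ℕ) :
    orient (circlePt n i) (circlePt n j) (circlePt n k) =
    4 * Real.sin (((j : ℝ) - i) * (Real.pi / n)) * Real.sin (((k : ℝ) - j) * (Real.pi / n)) *
      Real.sin (((k : ℝ) - i) * (Real.pi / n)) := by
  have h : ∀ x : ℕ, circlePt n x =
      (Real.cos (2 * (x * (Real.pi / n))), Real.sin (2 * (x * (Real.pi / n)))) := fun x => by
    have : 2 * Real.pi * x / n = 2 * (x * (Real.pi / n)) := by ring
    rw [circlePt, this]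
  rw [h, h, h, orient_cos_sin]
  simp only [sub_mul]

lemma sin_index_nonneg {n i j : ℕ} (hij : i ≤ j) (hj : j ≤ i + n) :
    0 ≤ Real.sin (((j : ℝ) - i) * (Real.pi / n)) := by
  have h1 : (i : ℝ) ≤ j := by exact_mod_cast hij
  have h2 : (j : ℝ) ≤ i + n := by exact_mod_cast hj
  apply Real.sin_nonneg_of_nonneg_of_le_pi
  · exact mul_nonneg (by linarith) (by positivity)
  · rcases Nat.eq_zero_or_pos n with rfl | hn
    · simpa using Real.pi_pos.le
    · calc ((j : ℝ) - i) * (Real.pi / n) ≤ n * (Real.pi / n) := by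
            gcongr; linarith
        _ = Real.pi := by field_simp

lemma sin_index_pos {n i j : ℕ} (hij : i < j) (hj : j < i + n) :
    0 < Real.sin (((j : ℝ) - i) * (Real.pi / n)) := by
  have h1 : (i : ℝ) < j := by exact_mod_cast hij
  have h2 : (j : ℝ) < i + n := by exact_mod_cast hj
  have hn : (0 : ℝ) < n := by linarith
  have := Real.pi_pos
  apply Real.sin_pos_of_pos_of_lt_pi
  · exact mul_pos (by linarith) (by positivity)
  · calc ((j : ℝ) - i) * (Real.pi / n) < n * (Real.pi / n) := by
          gcongr; linarith
      _ = Real.pi := by field_simp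

lemma orient_circlePt_nonneg {n i j k : ℕ} (hij : i ≤ j) (hjk : j ≤ k) (hk : k ≤ i + n) :
    0 ≤ orient (circlePt n i) (circlePt n j) (circlePt n k) := by
  rw [orient_circlePt]
  have h1 := sin_index_nonneg hij (show j ≤ i + n by omega)
  have h2 := sin_index_nonneg hjk (show k ≤ j + n by omega)
  have h3 := sin_index_nonneg (hij.trans hjk) hk
  positivity

lemma orient_circlePt_pos {n i j k : ℕ} (hij : i < j) (hjk : j < k) (hk : k < i + n) :
    0 < orient (circlePt n i) (circlePt n j) (circlePt n k) := by
  rw [orient_circlePt]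
  have h1 := sin_index_pos hij (show j < i + n by omega)
  have h2 := sin_index_pos hjk (show k < j + n by omega)
  have h3 := sin_index_pos (hij.trans hjk) hk
  positivity

/-- The vertices (even indices) and edge midpoints (odd indices) of the regular `n`-gon, in
cyclic order. -/
def boundaryPt (n k : ℕ) : ℝ × ℝ := midpoint ℝ (circlePt n (k / 2)) (circlePt n ((k + 1) / 2))

lemma orient_midpoint (A A' B B' C C' : ℝ × ℝ) :
    8 * orient (midpoint ℝ A A') (midpoint ℝ B B') (midpoint ℝ C C') =
      orient A B C + orient A B C' + orient A B' C + orient A B' C' +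
      orient A' B C + orient A' B C' + orient A' B' C + orient A' B' C' := by
  simp only [orient_def, midpoint_eq_smul_add, Prod.smul_fst, Prod.smul_snd, Prod.fst_add,
    Prod.snd_add, smul_eq_mul, invOf_eq_inv]
  ring

lemma orient_boundaryPt_pos {n : ℕ} (hn : 3 ≤ n) {x y z : ℕ} (hxy : x < y) (hyz : y < z)
    (hz : z < 2 * n) (h : ¬ EdgeTriple n x y z) :
    0 < orient (boundaryPt n x) (boundaryPt n y) (boundaryPt n z) := by
  have key := orient_midpoint (circlePt n (x / 2)) (circlePt n ((x + 1) / 2))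
    (circlePt n (y / 2)) (circlePt n ((y + 1) / 2)) (circlePt n (z / 2)) (circlePt n ((z + 1) / 2))
  have nn : ∀ {i j k}, i ≤ j → j ≤ k → k ≤ n →
      0 ≤ orient (circlePt n i) (circlePt n j) (circlePt n k) := fun h1 h2 h3 =>
    orient_circlePt_nonneg h1 h2 (by omega)
  have n1 := nn (i := x / 2) (j := y / 2) (k := z / 2) (by omega) (by omega) (by omega)
  have n2 := nn (i := x / 2) (j := y / 2) (k := (z + 1) / 2) (by omega) (by omega) (by omega)
  have n3 := nn (i := x / 2) (j := (y + 1) / 2) (k := z / 2) (by omega) (by omega) (by omega)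
  have n4 := nn (i := x / 2) (j := (y + 1) / 2) (k := (z + 1) / 2) (by omega) (by omega) (by omega)
  have n5 := nn (i := (x + 1) / 2) (j := y / 2) (k := z / 2) (by omega) (by omega) (by omega)
  have n6 := nn (i := (x + 1) / 2) (j := y / 2) (k := (z + 1) / 2) (by omega) (by omega) (by omega)
  have n7 := nn (i := (x + 1) / 2) (j := (y + 1) / 2) (k := z / 2) (by omega) (by omega) (by omega)
  have n8 := nn (i := (x + 1) / 2) (j := (y + 1) / 2) (k := (z + 1) / 2)
    (by omega) (by omega) (by omega)
  have hstrict : ∃ i j k, (i = x / 2 ∨ i = (x + 1) / 2) ∧ (j = y / 2 ∨ j = (y + 1) / 2) ∧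
      (k = z / 2 ∨ k = (z + 1) / 2) ∧ i < j ∧ j < k ∧ k < i + n := by
    by_contra hcon
    push Not at hcon
    have c1 := hcon _ _ _ (Or.inl rfl) (Or.inl rfl) (Or.inl rfl)
    have c2 := hcon _ _ _ (Or.inl rfl) (Or.inl rfl) (Or.inr rfl)
    have c3 := hcon _ _ _ (Or.inl rfl) (Or.inr rfl) (Or.inl rfl)
    have c4 := hcon _ _ _ (Or.inl rfl) (Or.inr rfl) (Or.inr rfl)
    have c5 := hcon _ _ _ (Or.inr rfl) (Or.inl rfl) (Or.inl rfl)
    have c6 := hcon _ _ _ (Or.inr rfl) (Or.inl rfl) (Or.inr rfl)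
    have c7 := hcon _ _ _ (Or.inr rfl) (Or.inr rfl) (Or.inl rfl)
    have c8 := hcon _ _ _ (Or.inr rfl) (Or.inr rfl) (Or.inr rfl)
    unfold EdgeTriple at h
    omega
  obtain ⟨i, j, k, hi, hj, hk, hij, hjk, hki⟩ := hstrict
  have hpos := orient_circlePt_pos hij hjk hki
  unfold boundaryPt
  rcases hi with rfl | rfl <;> rcases hj with rfl | rfl <;> rcases hk with rfl | rfl <;> linarith

lemma exists_orient_pos_nhds {n : ℕ} (hn : 3 ≤ n) :
    ∃ ε > (0 : ℝ), ∀ w : ℕ → ℝ × ℝ, (∀ k < 2 * n, dist (w k) (boundaryPt n k) < ε) →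
      ∀ x y z, x < y → y < z → z < 2 * n → ¬ EdgeTriple n x y z →
        0 < orient (w x) (w y) (w z) := by
  let T := {t : Fin (2 * n) × Fin (2 * n) × Fin (2 * n) //
    t.1 < t.2.1 ∧ t.2.1 < t.2.2 ∧ ¬ EdgeTriple n t.1 t.2.1 t.2.2}
  let U : Set (Fin (2 * n) → ℝ × ℝ) :=
    ⋂ t : T, {u | 0 < orient (u t.1.1) (u t.1.2.1) (u t.1.2.2)}
  have hU : IsOpen U := isOpen_iInter_of_finite fun t => by
    refine isOpen_lt continuous_const ?_
    simp only [orient_def]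
    fun_prop
  have hmem : (fun k : Fin (2 * n) => boundaryPt n k) ∈ U :=
    Set.mem_iInter.mpr fun t =>
      orient_boundaryPt_pos hn t.2.1 t.2.2.1 t.1.2.2.isLt t.2.2.2
  obtain ⟨ε, hε, hball⟩ := Metric.isOpen_iff.mp hU _ hmem
  refine ⟨ε, hε, fun w hw x y z hxy hyz hz h => ?_⟩
  have hwU : (fun k : Fin (2 * n) => w k) ∈ U :=
    hball ((dist_pi_lt_iff hε).mpr fun k => hw k k.isLt)
  exact Set.mem_iInter.mp hwU
    ⟨(⟨x, by omega⟩, ⟨y, by omega⟩, ⟨z, hz⟩), hxy, hyz, h⟩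

lemma convexHull_subset_halfPlane {A B : ℝ × ℝ} {S : Set (ℝ × ℝ)}
    (h : ∀ P ∈ S, 0 ≤ orient A B P) : ∀ P ∈ convexHull ℝ S, 0 ≤ orient A B P := by
  have hconv : Convex ℝ {P | 0 ≤ orient A B P} := by
    intro P hP Q hQ a b ha hb hab
    have e : orient A B (a • P + b • Q) = a * orient A B P + b * orient A B Q := by
      obtain rfl : b = 1 - a := by linarith
      simp only [orient_def, Prod.fst_add, Prod.snd_add, Prod.smul_fst, Prod.smul_snd, smul_eq_mul]
      ring
    simp only [Set.mem_ofPred_eq] at hP hQ ⊢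
    rw [e]
    positivity
  exact convexHull_min h hconv

lemma orient_edge_nonneg {n : ℕ} [NeZero n] (i : Fin n) {P : ℝ × ℝ}
    (hP : P ∈ convexHull ℝ (Set.range (vtx n))) :
    0 ≤ orient (circlePt n i) (circlePt n (i + 1)) P := by
  refine convexHull_subset_halfPlane ?_ P hP
  rintro _ ⟨k, rfl⟩
  change 0 ≤ orient _ _ (circlePt n k)
  rcases Nat.lt_or_ge i k with h | h
  · exact orient_circlePt_nonneg (by omega) (by omega) (by omega)
  · rw [orient_rotate]
    exact orient_circlePt_nonneg (by omega) (by omega) (by omega)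

/-- Vertices (even indices) and inner points (odd indices) in cyclic order. -/
def interleave (n : ℕ) [NeZero n] (m : Fin n → ℝ × ℝ) (k : ℕ) : ℝ × ℝ :=
  if k % 2 = 0 then circlePt n (k / 2) else m (Fin.ofNat n (k / 2))

lemma interleave_even {n : ℕ} [NeZero n] (m : Fin n → ℝ × ℝ) (k : ℕ) :
    interleave n m (2 * k) = circlePt n k := by
  simp [interleave]

lemma interleave_odd {n : ℕ} [NeZero n] (m : Fin n → ℝ × ℝ) (i : Fin n) :
    interleave n m (2 * i + 1) = m i := by
  have h : (2 * (i : ℕ) + 1) / 2 = i := by omega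
  have h' : (2 * (i : ℕ) + 1) % 2 = 1 := by omega
  simp [interleave, h, h']

lemma image_interleave {n : ℕ} [NeZero n] (m : Fin n → ℝ × ℝ) :
    (Finset.range (2 * n)).image (interleave n m) =
      Finset.image (vtx n) Finset.univ ∪ Finset.image m Finset.univ := by
  ext P
  simp only [Finset.mem_image, Finset.mem_range, Finset.mem_union, Finset.mem_univ, true_and]
  constructor
  · rintro ⟨k, hk, rfl⟩
    rcases Nat.even_or_odd' k with ⟨j, rfl | rfl⟩
    · exact Or.inl ⟨⟨j, by omega⟩, (interleave_even m j).symm⟩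
    · exact Or.inr ⟨⟨j, by omega⟩, (interleave_odd m ⟨j, by omega⟩).symm⟩
  · rintro (⟨i, rfl⟩ | ⟨i, rfl⟩)
    · exact ⟨2 * i, by omega, interleave_even m i⟩
    · exact ⟨2 * i + 1, by omega, interleave_odd m i⟩

lemma edgeReversed_interleave {n : ℕ} [NeZero n] (hn : 3 ≤ n) {m : Fin n → ℝ × ℝ}
    (hpos : ∀ x y z, x < y → y < z → z < 2 * n → ¬ EdgeTriple n x y z →
      0 < orient (interleave n m x) (interleave n m y) (interleave n m z))
    (hm : ∀ i, m i ∈ convexHull ℝ (Set.range (vtx n)))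
    (hgen : Generic ((Finset.range (2 * n)).image (interleave n m))) :
    EdgeReversed n (interleave n m) := by
  refine ⟨hpos, fun x y z h => ?_⟩
  have hinj := injOn_of_orient_pos hn hpos
  have hxyz : x < y ∧ y < z ∧ z < 2 * n := by unfold EdgeTriple at h; omega
  have hmem : ∀ k < 2 * n, interleave n m k ∈ (Finset.range (2 * n)).image (interleave n m) :=
    fun k hk => Finset.mem_image_of_mem _ (by simpa using hk)
  have hne : ∀ {a b}, a < b → b < 2 * n → interleave n m a ≠ interleave n m b := by
    intro a b hab hb heq
    exact hab.ne (hinj (by simpa using hab.trans hb) (by simpa using hb) heq)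
  have h0 : orient (interleave n m x) (interleave n m y) (interleave n m z) ≠ 0 := fun h0 =>
    hgen _ (hmem x (by omega)) _ (hmem y (by omega)) _ (hmem z (by omega))
      (hne (by omega) (by omega)) (hne (by omega) (by omega)) (hne (by omega) (by omega))
      (collinear_of_orient_eq_zero (hne (by omega) (by omega)) h0)
  refine lt_of_le_of_ne ?_ h0
  rcases h with ⟨hx, rfl, rfl, hlt⟩ | ⟨rfl, -, hy, hz⟩
  · obtain ⟨i, rfl⟩ : ∃ i : Fin n, x = 2 * i := ⟨⟨x / 2, by omega⟩, by simp only; omega⟩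
    have := orient_edge_nonneg i (hm i)
    rw [orient_swap] at this
    rw [interleave_odd, interleave_even, show 2 * (i : ℕ) + 2 = 2 * (i + 1) by ring,
      interleave_even]
    linarith
  · obtain ⟨i, rfl⟩ : ∃ i : Fin n, y = 2 * i := ⟨⟨y / 2, by omega⟩, by simp only; omega⟩
    obtain rfl : z = 2 * i + 1 := by omega
    have := orient_edge_nonneg i (hm i)
    rw [show (i : ℕ) + 1 = n by omega, circlePt_self (by omega), ← orient_rotate, orient_swap]
      at this
    rw [interleave_odd, interleave_even, show 0 = 2 * 0 by rfl, interleave_even]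
    linarith

/-- For `n ≥ 3`, the `2n`-point configuration formed by the vertices of a
regular `n`-gon together with points slightly inside the polygon near the
midpoints of all edges (in generic position) is monochromatic. -/
theorem midpoint_family_mono (n : ℕ) [NeZero n] (hn : 3 ≤ n) :
    ∃ ε > (0 : ℝ), ∀ m : Fin n → ℝ × ℝ,
      (∀ i : Fin n, dist (m i) (midpoint ℝ (vtx n i) (vtx n (i + 1))) < ε) →
      (∀ i : Fin n, m i ∈ interior (convexHull ℝ (Set.range (vtx n)))) →
      Generic (Finset.image (vtx n) Finset.univ ∪ Finset.image m Finset.univ) →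
      Mono (Finset.image (vtx n) Finset.univ ∪ Finset.image m Finset.univ) := by
  obtain ⟨ε, hε, h⟩ := exists_orient_pos_nhds hn
  refine ⟨ε, hε, fun m hdist hint hgen => ?_⟩
  rw [← image_interleave] at hgen ⊢
  refine (edgeReversed_interleave hn (h _ fun k hk => ?_)
    (fun i => interior_subset (hint i)) hgen).mono hn
  rcases Nat.even_or_odd' k with ⟨j, rfl | rfl⟩
  · have h1 : 2 * j / 2 = j := by omega
    have h2 : (2 * j + 1) / 2 = j := by omega
    rw [interleave_even, boundaryPt, h1, h2, midpoint_self, dist_self]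
    exact hε
  · have h1 : (2 * j + 1) / 2 = j := by omega
    have h2 : (2 * j + 1 + 1) / 2 = j + 1 := by omega
    have := hdist ⟨j, by omega⟩
    rw [vtx_add_one hn] at this
    rw [boundaryPt, h1, h2]
    exact (interleave_odd m ⟨j, by omega⟩).symm ▸ this
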